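/- arXiv:1808.08851 — 3 statements merged into one kernel-verified Lean document; each statement's English description precedes it below -/
import Mathlib

section
/- Let V be a finite type and K an abstract simplicial complex on V. Then K is flag if and only if for every simplex σ ∈ K the link of σ is the full subcomplex of K on the link's vertex set; explicitly: K is flag if and only if for all σ, τ ∈ K such that every vertex u ∈ τ satisfies u ∉ σ and σ ∪ {u} ∈ K, one has σ ∪ τ ∈ K. -/
/-!
In a flag complex a finite set of vertices is a face as soon as its pairs are. If `σ` and `τ` are
faces and every vertex of `τ` lies in the link of `σ`, then the pairs inside `σ ∪ τ` are edges of
`σ`, edges of `τ`, or edges joining `σ` to `τ`, so `σ ∪ τ` is a face.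

Conversely, let `a` be a vertex of a minimal nonface `J`. The face `J \ {a}` is not in the link of
`a`; if that link is full, some `u ∈ J \ {a}` is not a vertex of it. Hence `{u, a}` is already a
nonface, and `J = {u, a}` by minimality.
-/

section

variable {V : Type*} {K : Set (Finset V)} {σ ρ J : Finset V}

/-- A flag complex: all minimal nonfaces have two elements. A complex is encoded as its set of
faces, which includes the empty one, in contrast to `AbstractSimplicialComplex`. -/
def IsFlagComplex (K : Set (Finset V)) : Prop :=
  ∀ J, Minimal (· ∉ K) J → J.card = 2

/-- `L` is a full subcomplex of `K`: it contains every face of `K` all of whose vertices are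
vertices of `L`. The inclusion of `L` in `K` is not part of the definition. -/
def IsFullSubcomplex (L K : Set (Finset V)) : Prop :=
  ∀ τ ∈ K, (∀ u ∈ τ, {u} ∈ L) → τ ∈ L

/-- The link of `σ` in the complex `K`. It contains the empty face exactly when `σ` is a face of
`K`. -/
def simplicialLink [DecidableEq V] (K : Set (Finset V)) (σ : Finset V) : Set (Finset V) :=
  {τ | Disjoint σ τ ∧ σ ∪ τ ∈ K}

theorem isFlagComplex_iff_forall_ssubset :
    IsFlagComplex K ↔ ∀ J, J ∉ K → (∀ τ ⊂ J, τ ∈ K) → J.card = 2 := by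
  simp only [IsFlagComplex, minimal_iff_forall_lt, and_imp, not_not]

theorem IsFlagComplex.mem_of_pairwise [DecidableEq V] (hflag : IsFlagComplex K)
    (hρ : (ρ : Set V).Pairwise fun a b ↦ {a, b} ∈ K) : ρ ∈ K := by
  by_contra hρK
  obtain ⟨J, hJρ, hJ⟩ := exists_minimal_le_of_wellFoundedLT (· ∉ K) ρ hρK
  obtain ⟨a, b, hab, rfl⟩ := Finset.card_eq_two.mp (hflag J hJ)
  exact hJ.prop (hρ (hJρ (by simp)) (hJρ (by simp)) hab)

theorem pairwise_pair_mem_of_mem [DecidableEq V] (hK : IsLowerSet K) (hσ : σ ∈ K) :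
    (σ : Set V).Pairwise fun a b ↦ {a, b} ∈ K :=
  fun _ ha _ hb _ ↦ hK (Finset.insert_subset ha (Finset.singleton_subset_iff.mpr hb)) hσ

theorem singleton_mem_simplicialLink [DecidableEq V] {u : V} :
    {u} ∈ simplicialLink K σ ↔ u ∉ σ ∧ insert u σ ∈ K := by
  simp [simplicialLink, Finset.union_singleton]

theorem isFullSubcomplex_simplicialLink_iff [DecidableEq V] :
    IsFullSubcomplex (simplicialLink K σ) K ↔
      ∀ τ ∈ K, (∀ u ∈ τ, u ∉ σ ∧ insert u σ ∈ K) → σ ∪ τ ∈ K := by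
  simp only [IsFullSubcomplex, singleton_mem_simplicialLink]
  refine forall₃_congr fun τ _ hlink ↦ and_iff_right ?_
  exact Finset.disjoint_right.mpr fun u hu ↦ (hlink u hu).1

theorem IsFlagComplex.isFullSubcomplex_simplicialLink [DecidableEq V] (hflag : IsFlagComplex K)
    (hK : IsLowerSet K) (hσ : σ ∈ K) : IsFullSubcomplex (simplicialLink K σ) K := by
  refine isFullSubcomplex_simplicialLink_iff.mpr fun τ hτ hlink ↦ hflag.mem_of_pairwise ?_
  have : Std.Symm fun a b : V ↦ {a, b} ∈ K := ⟨fun a b hab ↦ Finset.pair_comm a b ▸ hab⟩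
  rw [Finset.coe_union, Set.pairwise_union_of_symm]
  refine ⟨pairwise_pair_mem_of_mem hK hσ, pairwise_pair_mem_of_mem hK hτ, fun a ha b hb hab ↦ ?_⟩
  exact pairwise_pair_mem_of_mem hK (hlink b hb).2 (Finset.mem_insert_of_mem ha)
    (Finset.mem_insert_self b σ) hab

theorem card_eq_two_of_isFullSubcomplex_simplicialLink [DecidableEq V] {a : V}
    (hfull : IsFullSubcomplex (simplicialLink K {a}) K) (hJ : Minimal (· ∉ K) J) (ha : a ∈ J) :
    J.card = 2 := by
  have hface : J.erase a ∈ K := not_not.mp (hJ.not_prop_of_lt (Finset.erase_ssubset ha))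
  have hnotMem : {a} ∪ J.erase a ∉ K := by
    rw [← Finset.insert_eq, Finset.insert_erase ha]
    exact hJ.prop
  obtain ⟨u, hu, hua⟩ : ∃ u ∈ J.erase a, {u, a} ∉ K := by
    by_contra! hedge
    refine hnotMem (isFullSubcomplex_simplicialLink_iff.mp hfull _ hface fun u hu ↦ ?_)
    refine ⟨?_, hedge u hu⟩
    exact Finset.notMem_singleton.mpr (Finset.ne_of_mem_erase hu)
  have hsub : {u, a} ⊆ J :=
    Finset.insert_subset (Finset.mem_of_mem_erase hu) (Finset.singleton_subset_iff.mpr ha)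
  rw [hJ.eq_of_ge hua hsub, Finset.card_pair (Finset.ne_of_mem_erase hu)]

theorem flag_iff_links_full_general [DecidableEq V] (hK : IsLowerSet K) (hempty : ∅ ∈ K)
    (hvert : ∀ v : V, {v} ∈ K) :
    List.TFAE [IsFlagComplex K,
      ∀ σ ∈ K, IsFullSubcomplex (simplicialLink K σ) K,
      ∀ v : V, IsFullSubcomplex (simplicialLink K {v}) K] := by
  tfae_have 1 → 2 := fun hflag _ hσ ↦ hflag.isFullSubcomplex_simplicialLink hK hσ
  tfae_have 2 → 3 := fun hfull v ↦ hfull {v} (hvert v)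
  tfae_have 3 → 1 := fun hfull J hJ ↦ by
    obtain ⟨a, ha⟩ : J.Nonempty := Finset.nonempty_iff_ne_empty.mpr fun h ↦ hJ.prop (h ▸ hempty)
    exact card_eq_two_of_isFullSubcomplex_simplicialLink (hfull a) hJ ha
  tfae_finish

end

/-- A simplicial complex `K` on a finite vertex type `V` is flag (every
minimal nonface has exactly two elements) if and only if for every simplex `σ ∈ K` the
link of `σ` is the full subcomplex of `K` on the link's vertex set: for all
`σ, τ ∈ K` such that every vertex `u ∈ τ` satisfies `u ∉ σ` and `σ ∪ {u} ∈ K`, one has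
`σ ∪ τ ∈ K`. -/
theorem flag_iff_links_full {V : Type*} [Fintype V] [DecidableEq V]
    (K : Set (Finset V))
    (hdown : ∀ σ ∈ K, ∀ τ ⊆ σ, τ ∈ K)
    (hempty : (∅ : Finset V) ∈ K)
    (hvert : ∀ v : V, ({v} : Finset V) ∈ K) :
    (∀ J : Finset V, J ∉ K → (∀ τ ⊂ J, τ ∈ K) → J.card = 2) ↔
      (∀ σ ∈ K, ∀ τ ∈ K,
        (∀ u ∈ τ, u ∉ σ ∧ insert u σ ∈ K) → σ ∪ τ ∈ K) := by
  have hK : IsLowerSet K := fun σ τ hτσ hσ ↦ hdown σ hσ τ hτσ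
  have hflag : IsFlagComplex K ↔ ∀ σ ∈ K, IsFullSubcomplex (simplicialLink K σ) K :=
    (flag_iff_links_full_general hK hempty hvert).out 0 1
  simpa only [isFlagComplex_iff_forall_ssubset, isFullSubcomplex_simplicialLink_iff] using hflag
end

section
/- Let V be a finite type, K a flag abstract simplicial complex on V, and σ₀ ∈ K. Put S = {v ∈ V : v ∉ σ₀ and σ₀ ∪ {v} ∈ K} (the vertex set of the link of σ₀) and let L be the link of σ₀ regarded as a simplicial complex on S, i.e. L = {τ ⊆ S finset : (the image of τ in V) ∪ σ₀ ∈ K}. Then the extension-by-1 map ext maps Z_L into Z_K, the restriction map res maps Z_K into Z_L, and res ∘ ext = id on Z_L; hence Z_L is a retract of Z_K via continuous maps. -/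
open scoped Classical

/-- The moment-angle complex of a simplicial complex `K` on the vertex type `V`, as a
subset of `V → ℂ`. -/
def momentAngleComplex {V : Type*} (K : Set (Finset V)) : Set (V → ℂ) :=
  {z | ∃ σ ∈ K, (∀ v ∈ σ, ‖z v‖ ≤ 1) ∧ (∀ v ∉ σ, ‖z v‖ = 1)}

/-- The extension-by-1 map `ext : (S → ℂ) → (V → ℂ)`. -/
noncomputable def extMap {V : Type*} (S : Set V) (z : S → ℂ) : V → ℂ :=
  fun v => if h : v ∈ S then z ⟨v, h⟩ else 1

/-- The restriction map `res : (V → ℂ) → (S → ℂ)`, `res z = z|_S`. -/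
def resMap {V : Type*} (S : Set V) (z : V → ℂ) : S → ℂ :=
  fun v => z v

/-!
The restriction map retracts `Z_K` onto `Z_{K_S}` for *every* full subcomplex `K_S`, because
down-closure lets one intersect a face with `S`. Flagness enters only to see that the link of a
face is a full subcomplex: if each vertex of a face `τ` spans a face together with `σ₀`, then all
pairs in `τ ∪ σ₀` are edges, so `τ ∪ σ₀` is itself a face.
-/

section

variable {V : Type*}

lemma mem_momentAngleComplex_iff {K : Set (Finset V)} {z : V → ℂ} :
    z ∈ momentAngleComplex K ↔ ∃ σ ∈ K, ∀ v, (v ∈ σ → ‖z v‖ ≤ 1) ∧ (v ∉ σ → ‖z v‖ = 1) := by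
  simp only [momentAngleComplex, Set.mem_ofPred_eq, forall_and]

section ExtRes

variable (S : Set V)

@[simp]
lemma extMap_coe (z : S → ℂ) (v : S) : extMap S z v = z v :=
  dif_pos v.2

lemma extMap_of_notMem (z : S → ℂ) {v : V} (hv : v ∉ S) : extMap S z v = 1 :=
  dif_neg hv

lemma resMap_extMap (z : S → ℂ) : resMap S (extMap S z) = z :=
  funext (extMap_coe S z)

lemma continuous_extMap : Continuous (extMap S) := by
  refine continuous_pi fun v => ?_
  by_cases hv : v ∈ S
  · simpa only [extMap, dif_pos hv] using continuous_apply (⟨v, hv⟩ : S)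
  · simpa only [extMap, dif_neg hv] using continuous_const

lemma continuous_resMap : Continuous (resMap S) :=
  continuous_pi fun v => continuous_apply v.1

end ExtRes

/-- `K` is flag: each of its minimal nonfaces has exactly two vertices. -/
def IsFlag (K : Set (Finset V)) : Prop :=
  ∀ J, J ∉ K → (∀ τ ⊂ J, τ ∈ K) → J.card = 2

variable [DecidableEq V] {K : Set (Finset V)}

/-- The full subcomplex `K_S` of `K` on a set `S` of vertices, with faces encoded as finsets of
the subtype `S`. -/
def fullSubcomplex (K : Set (Finset V)) (S : Set V) : Set (Finset S) :=
  {τ | τ.image Subtype.val ∈ K}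

lemma mapsTo_extMap (K : Set (Finset V)) (S : Set V) :
    Set.MapsTo (extMap S) (momentAngleComplex (fullSubcomplex K S)) (momentAngleComplex K) := by
  rintro z ⟨τ, hτ, hle, heq⟩
  refine ⟨τ.image Subtype.val, hτ, ?_, fun v hv => ?_⟩
  · simpa only [Finset.forall_mem_image, extMap_coe] using hle
  · by_cases hvS : v ∈ S
    · have hvτ : (⟨v, hvS⟩ : S) ∉ τ := fun h => hv (Finset.mem_image_of_mem _ h)
      exact (congrArg norm (extMap_coe S z ⟨v, hvS⟩)).trans (heq _ hvτ)
    · rw [extMap_of_notMem S z hvS, norm_one]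

lemma mapsTo_resMap (hK : IsLowerSet K) (S : Set V) :
    Set.MapsTo (resMap S) (momentAngleComplex K) (momentAngleComplex (fullSubcomplex K S)) := by
  rintro z ⟨σ, hσ, hle, heq⟩
  have himage : (σ.subtype (· ∈ S)).image Subtype.val ⊆ σ :=
    Finset.image_subset_iff.2 fun _ hv => Finset.mem_subtype.1 hv
  exact ⟨σ.subtype (· ∈ S), hK himage hσ, fun v hv => hle v (Finset.mem_subtype.1 hv),
    fun v hv => heq v fun h => hv (Finset.mem_subtype.2 h)⟩

namespace IsFlag

lemma mem_of_pairwise (hflag : IsFlag K) {J : Finset V}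
    (hJ : (J : Set V).Pairwise fun x y => {x, y} ∈ K) : J ∈ K := by
  induction J using Finset.strongInduction with
  | H J ih =>
    by_contra hJK
    have hcard : J.card = 2 :=
      hflag J hJK fun τ hτ => ih τ hτ (hJ.mono (Finset.coe_subset.2 hτ.subset))
    obtain ⟨x, y, hxy, rfl⟩ := Finset.card_eq_two.1 hcard
    exact hJK (hJ (by simp) (by simp) hxy)

lemma union_mem (hflag : IsFlag K) (hK : IsLowerSet K) {σ τ : Finset V} (hσ : σ ∈ K)
    (hτ : τ ∈ K) (hins : ∀ v ∈ τ, insert v σ ∈ K) : τ ∪ σ ∈ K := by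
  have pair_mem {ρ : Finset V} (hρ : ρ ∈ K) {x y : V} (hx : x ∈ ρ) (hy : y ∈ ρ) : {x, y} ∈ K :=
    hK (Finset.insert_subset hx (Finset.singleton_subset_iff.2 hy)) hρ
  have : Std.Symm fun x y : V => {x, y} ∈ K := ⟨fun x y h => by rwa [Finset.pair_comm]⟩
  apply hflag.mem_of_pairwise
  rw [Finset.coe_union, Set.pairwise_union_of_symm]
  exact ⟨fun _ hx _ hy _ => pair_mem hτ hx hy, fun _ hx _ hy _ => pair_mem hσ hx hy,
    fun x hx _ hy _ => pair_mem (hins x hx) (Finset.mem_insert_self x σ)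
      (Finset.mem_insert_of_mem hy)⟩

end IsFlag

/-- The full subcomplex on `S` of the closed star of `σ₀` in `K`, with faces encoded as finsets of
the subtype `S`. It is the link of `σ₀` when `S` is the vertex set of that link. -/
def linkOn (K : Set (Finset V)) (σ₀ : Finset V) (S : Set V) : Set (Finset S) :=
  {τ | τ.image Subtype.val ∪ σ₀ ∈ K}

lemma linkOn_eq_fullSubcomplex (hK : IsLowerSet K) (hflag : IsFlag K) {σ₀ : Finset V}
    (hσ₀ : σ₀ ∈ K) {S : Set V} (hS : ∀ v ∈ S, insert v σ₀ ∈ K) :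
    linkOn K σ₀ S = fullSubcomplex K S := by
  ext τ
  refine ⟨fun hτ => hK Finset.subset_union_left hτ, fun hτ => hflag.union_mem hK hσ₀ hτ ?_⟩
  exact Finset.forall_mem_image.2 fun v _ => hS v v.2

theorem momentAngle_link_retract_of_flag_general (hK : IsLowerSet K) (hflag : IsFlag K)
    {σ₀ : Finset V} (hσ₀ : σ₀ ∈ K) {S : Set V} (hS : ∀ v ∈ S, insert v σ₀ ∈ K) :
    Continuous (extMap S) ∧ Continuous (resMap S) ∧
      Set.MapsTo (extMap S) (momentAngleComplex (linkOn K σ₀ S)) (momentAngleComplex K) ∧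
      Set.MapsTo (resMap S) (momentAngleComplex K) (momentAngleComplex (linkOn K σ₀ S)) ∧
      Set.LeftInvOn (resMap S) (extMap S) (momentAngleComplex (linkOn K σ₀ S)) := by
  rw [linkOn_eq_fullSubcomplex hK hflag hσ₀ hS]
  exact ⟨continuous_extMap S, continuous_resMap S, mapsTo_extMap K S, mapsTo_resMap hK S,
    fun z _ => resMap_extMap S z⟩

end

/-- Let `K` be a flag simplicial complex on a finite vertex type `V` and
`σ₀ ∈ K`. Let `S = {v ∉ σ₀ | σ₀ ∪ {v} ∈ K}` be the vertex set of the link of `σ₀`, and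
let `L` be the link of `σ₀` regarded as a simplicial complex on `S`. Then the
extension-by-1 map maps `Z_L` into `Z_K`, the restriction map maps `Z_K` into `Z_L`, and
`res ∘ ext = id` on `Z_L`; hence `Z_L` is a retract of `Z_K` via continuous maps. -/
theorem momentAngle_link_retract_of_flag {V : Type*} [Fintype V] [DecidableEq V]
    (K : Set (Finset V))
    (hdown : ∀ σ ∈ K, ∀ τ ⊆ σ, τ ∈ K)
    (hempty : (∅ : Finset V) ∈ K)
    (hvert : ∀ v : V, ({v} : Finset V) ∈ K)
    (hflag : ∀ J : Finset V, J ∉ K → (∀ τ ⊂ J, τ ∈ K) → J.card = 2)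
    (σ₀ : Finset V) (hσ₀ : σ₀ ∈ K)
    (S : Set V) (hS : S = {v : V | v ∉ σ₀ ∧ insert v σ₀ ∈ K})
    (ZL : Set (S → ℂ))
    (hZL : ZL = {z : S → ℂ | ∃ τ : Finset S,
      (τ.image Subtype.val ∪ σ₀ ∈ K) ∧
      ∀ v : S, (v ∈ τ → ‖z v‖ ≤ 1) ∧ (v ∉ τ → ‖z v‖ = 1)}) :
    Continuous (extMap S) ∧ Continuous (resMap S) ∧
      (∀ z ∈ ZL, extMap S z ∈ momentAngleComplex K) ∧
      (∀ z ∈ momentAngleComplex K, resMap S z ∈ ZL) ∧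
      (∀ z ∈ ZL, resMap S (extMap S z) = z) := by
  obtain rfl : ZL = momentAngleComplex (linkOn K σ₀ S) :=
    hZL.trans (Set.ext fun _ => mem_momentAngleComplex_iff.symm)
  exact momentAngle_link_retract_of_flag_general (fun σ τ hle hσ => hdown σ hσ τ hle) hflag hσ₀
    fun v hv => (hS.subset hv).2
end

section
/- Let R = ℤ[v₁, v₂, v₃, v₄, v₅]/I, where I is the ideal generated by v₁ − v₃ − v₄, v₂ − v₄ − v₅, v₁v₃, v₁v₄, v₂v₄, v₂v₅, v₃v₅. Then v₃² ≠ 0 in R (equivalently, the polynomial v₃² does not belong to the ideal I). -/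
open MvPolynomial

/-! The two linear generators vanish on the plane of points with `v₁ = v₃ + v₄`, `v₂ = v₄ + v₅`, so
a linear combination of evaluations at points of this plane, applied to quadratic parts, kills all
their multiples. It vanishes on `I` as soon as it vanishes on the five monomials. The intersection
form of `M` is isometric to `⟨1⟩ ⊕ ⟨1⟩ ⊕ ⟨-1⟩`; in diagonalizing coordinates the evaluation
`H⁴(M) ≅ ℤ` becomes `f ↦ f(p₀) + f(p₁) - f(p₂)` for three such points, and it sends `v₃²` to `1`. -/

section LineRestriction

variable {σ ι R : Type*} [CommSemiring R]

/-- The restriction of a polynomial to the line through the origin spanned by `w`, as a polynomial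
in the parameter of that line. Its coefficient of degree `n` is the value at `w` of the homogeneous
component of degree `n`. -/
noncomputable def lineRestriction (w : σ → R) : MvPolynomial σ R →ₐ[R] Polynomial R :=
  aeval fun i => Polynomial.C (w i) * Polynomial.X

lemma coeff_zero_lineRestriction (w : σ → R) (q : MvPolynomial σ R) :
    (lineRestriction w q).coeff 0 = constantCoeff q := by
  have h : Polynomial.constantCoeff.comp (lineRestriction w).toRingHom = constantCoeff := by
    ext <;> simp [lineRestriction]
  exact DFunLike.congr_fun h q

lemma lineRestriction_eq_of_isHomogeneous {f : MvPolynomial σ R} {n : ℕ}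
    (hf : f.IsHomogeneous n) (w : σ → R) :
    lineRestriction w f = Polynomial.C (eval w f) * Polynomial.X ^ n := by
  have h_degree {d : σ →₀ ℕ} (hd : d ∈ f.support) : ∑ i ∈ d.support, d i = n :=
    (hf.degree_eq_sum_deg_support hd).symm
  simp only [lineRestriction, aeval_def, eval₂_eq, eval_eq, map_sum, map_mul, map_prod, map_pow,
    Finset.sum_mul, mul_pow, Finset.prod_mul_distrib, Finset.prod_pow_eq_pow_sum,
    Polynomial.algebraMap_eq, mul_assoc]
  exact Finset.sum_congr rfl fun d hd => by rw [h_degree hd]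

lemma coeff_lineRestriction_of_isHomogeneous {f : MvPolynomial σ R} {n : ℕ}
    (hf : f.IsHomogeneous n) (w : σ → R) :
    (lineRestriction w f).coeff n = eval w f := by
  rw [lineRestriction_eq_of_isHomogeneous hf, Polynomial.coeff_C_mul_X_pow, if_pos rfl]

lemma coeff_lineRestriction_mul_of_isHomogeneous {f : MvPolynomial σ R} {n : ℕ}
    (hf : f.IsHomogeneous n) (w : σ → R) (q : MvPolynomial σ R) :
    (lineRestriction w (q * f)).coeff n = constantCoeff q * eval w f := by
  rw [map_mul, lineRestriction_eq_of_isHomogeneous hf, ← mul_assoc, Polynomial.coeff_mul_X_pow',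
    if_pos le_rfl, Nat.sub_self, Polynomial.coeff_mul_C, coeff_zero_lineRestriction]

theorem sum_mul_eval_eq_zero_of_mem_span [Fintype ι] (c : ι → R) (w : ι → σ → R)
    {S : Set (MvPolynomial σ R)} {n : ℕ}
    (hS : ∀ f ∈ S, (∃ d, f.IsHomogeneous d ∧ ∀ k, eval (w k) f = 0) ∨
      (f.IsHomogeneous n ∧ ∑ k, c k * eval (w k) f = 0))
    {g : MvPolynomial σ R} (hg : g.IsHomogeneous n) (hgS : g ∈ Ideal.span S) :
    ∑ k, c k * eval (w k) g = 0 := by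
  suffices h : ∑ k, c k * (lineRestriction (w k) g).coeff n = 0 by
    simpa only [coeff_lineRestriction_of_isHomogeneous hg] using h
  clear hg
  induction hgS using Submodule.closure_induction with
  | zero => simp
  | add x y _ _ hx hy => simp [mul_add, Finset.sum_add_distrib, hx, hy]
  | smul_mem q f hf =>
    rcases hS f hf with ⟨d, hd, h_eval⟩ | ⟨hn, h_sum⟩
    · simp [lineRestriction_eq_of_isHomogeneous hd, h_eval]
    · simp only [smul_eq_mul, coeff_lineRestriction_mul_of_isHomogeneous hn,
        mul_left_comm _ (constantCoeff q), ← Finset.mul_sum, h_sum, mul_zero]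

end LineRestriction

/-- Three points of the plane `v₁ = v₃ + v₄`, `v₂ = v₄ + v₅`: the entry `pentagonPoint R k i` is the
`k`-th coordinate of the class of `X i` in a basis of `H²(M)` in which the intersection form is
`⟨1⟩ ⊕ ⟨1⟩ ⊕ ⟨-1⟩`. -/
def pentagonPoint (R : Type*) [Ring R] : Fin 3 → Fin 5 → R :=
  ![![0, -1, 1, -1, 0], ![-1, 0, 0, -1, 1], ![1, 1, 0, 1, 0]]

theorem pentagon_quasitoric_cohomology_v3_sq_ne_zero_general {R : Type*} [CommRing R]
    [Nontrivial R] (I : Ideal (MvPolynomial (Fin 5) R))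
    (hI : I = Ideal.span {X 0 - X 2 - X 3, X 1 - X 3 - X 4,
      X 0 * X 2, X 0 * X 3, X 1 * X 3, X 1 * X 4, X 2 * X 4}) :
    Ideal.Quotient.mk I (X 2 ^ 2) ≠ 0 := by
  have h_linear (i j k : Fin 5) : (X i - X j - X k : MvPolynomial (Fin 5) R).IsHomogeneous 1 :=
    ((isHomogeneous_X R i).sub (isHomogeneous_X R j)).sub (isHomogeneous_X R k)
  have h_quadratic (i j : Fin 5) : (X i * X j : MvPolynomial (Fin 5) R).IsHomogeneous 2 :=
    (isHomogeneous_X R i).mul (isHomogeneous_X R j)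
  intro h
  rw [Ideal.Quotient.eq_zero_iff_mem, hI] at h
  have h_zero : ∑ k, ![1, 1, -1] k * eval (pentagonPoint R k) (X 2 ^ 2) = 0 := by
    refine sum_mul_eval_eq_zero_of_mem_span _ _ ?_ (isHomogeneous_X_pow 2 2) h
    rintro f (rfl | rfl | rfl | rfl | rfl | rfl | rfl)
    iterate 2 exact .inl ⟨1, h_linear _ _ _, fun k => by fin_cases k <;> simp [pentagonPoint]⟩
    all_goals exact .inr ⟨h_quadratic _ _, by simp [Fin.sum_univ_three, pentagonPoint]⟩
  simp [Fin.sum_univ_three, pentagonPoint] at h_zero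

/-- Let `R = ℤ[v₁,…,v₅]/I`, where `I` is generated by
`v₁ − v₃ − v₄`, `v₂ − v₄ − v₅`, `v₁v₃`, `v₁v₄`, `v₂v₄`, `v₂v₅`, `v₃v₅`
(variables `v₁,…,v₅` encoded as `X 0,…,X 4`). Then `v₃² ≠ 0` in `R`, i.e. the
polynomial `v₃²` does not belong to the ideal `I`. -/
theorem pentagon_quasitoric_cohomology_v3_sq_ne_zero
    (I : Ideal (MvPolynomial (Fin 5) ℤ))
    (hI : I = Ideal.span {X 0 - X 2 - X 3, X 1 - X 3 - X 4,
      X 0 * X 2, X 0 * X 3, X 1 * X 3, X 1 * X 4, X 2 * X 4}) :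
    Ideal.Quotient.mk I (X 2 ^ 2) ≠ 0 :=
  pentagon_quasitoric_cohomology_v3_sq_ne_zero_general I hI
end
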